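/- arXiv:1812.09498 — 2 statements merged into one kernel-verified Lean document; each statement's English description precedes it below -/
import Mathlib

section
/- Assume hypothesis (H). Then for every c ∈ (a,b), every straight mesh on [a,c] and every inverse mesh on [0,u_b], there exists a scheme pair (ũ, x̃) which in addition satisfies: 0 < ũ(x) < u_b, ũ'(x) > 0 and ũ''(x) ≥ 0 for all x ∈ (a,c] (second derivatives taken on the mesh subintervals), and c < x̃(v), x̃'(v) > 0 and x̃''(v) ≤ 0 for all v ∈ (ũ(c), u_b], with x̃(v) < b for v ∈ (ũ(c), u_b). -/
open Set Filter

noncomputable section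

/-- Partial derivative of a two-argument function with respect to its first argument. -/
def pd1 (f : ℝ → ℝ → ℝ) (u x : ℝ) : ℝ := deriv (fun t => f t x) u

/-- Partial derivative of a two-argument function with respect to its second argument. -/
def pd2 (f : ℝ → ℝ → ℝ) (u x : ℝ) : ℝ := deriv (fun s => f u s) x

/-- The nonlinearity `𝒩(u,x) = N(u,x)·u`. -/
def Ncal (N : ℝ → ℝ → ℝ) (u x : ℝ) : ℝ := N u x * u

/-- `u` is twice continuously differentiable on `s`, with first derivative `u'`
and second derivative `u''` (derivatives within `s`). -/
def IsC2On (u u' u'' : ℝ → ℝ) (s : Set ℝ) : Prop :=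
  (∀ x ∈ s, HasDerivWithinAt u (u' x) s x) ∧
  (∀ x ∈ s, HasDerivWithinAt u' (u'' x) s x) ∧
  ContinuousOn u'' s

/-- The straight boundary value problem: `u ∈ C²([a,b])`, `u'' = 𝒩(u(x),x)` on `[a,b]`,
`u(a) = 0`, `u(b) = ub`. -/
def IsStraightBVP (N : ℝ → ℝ → ℝ) (a b ub : ℝ) (u u' u'' : ℝ → ℝ) : Prop :=
  IsC2On u u' u'' (Icc a b) ∧
  (∀ x ∈ Icc a b, u'' x = Ncal N (u x) x) ∧
  u a = 0 ∧ u b = ub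

/-- Hypothesis (H): `N`, `∂N/∂x`, `∂N/∂u`, `∂²N/∂x∂u`, `∂²N/∂u²` are all
nonnegative for `u ≥ 0` and `x ∈ [a,b]`. -/
def HypH (N : ℝ → ℝ → ℝ) (a b : ℝ) : Prop :=
  ∀ u : ℝ, 0 ≤ u → ∀ x ∈ Icc a b,
    0 ≤ N u x ∧ 0 ≤ pd2 N u x ∧ 0 ≤ pd1 N u x ∧
    0 ≤ pd2 (pd1 N) u x ∧ 0 ≤ pd1 (pd1 N) u x

/-- A mesh: finitely many strictly increasing points `pt 0 < pt 1 < ⋯ < pt n`. -/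
structure Mesh where
  n : ℕ
  pt : ℕ → ℝ
  npos : 0 < n
  mono : ∀ i < n, pt i < pt (i + 1)

/-- The coefficient `α_i(p,q,x)` of the straight discretized equation,
where `xi` is the mesh point `x_i`. -/
def alphaC (N : ℝ → ℝ → ℝ) (xi p q x : ℝ) : ℝ :=
  (pd1 N q xi * p + pd2 N q xi) * (x - xi) + N q xi

/-- The coefficient `β_i(p,q,v)` of the inverse discretized equation,
where `ui` is the (shifted) mesh point `ū_i`. -/
def betaC (N : ℝ → ℝ → ℝ) (ui p q v : ℝ) : ℝ :=
  -(pd1 (Ncal N) ui q + pd2 (Ncal N) ui q * p) * (v - ui) - Ncal N ui q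

/-- Shifted mesh knots `ū_i = max(u_i, s)`. -/
def ubar (m : Mesh) (s : ℝ) (i : ℕ) : ℝ := max (m.pt i) s

/-- A straight scheme solution on `[a,c]` with respect to the mesh `m`:
`ũ ∈ C¹([a,c])` and on each mesh subinterval `[x_i, x_{i+1}]` the second
derivative of `ũ` equals `α_i(ũ'(x_i), ũ(x_i), x)·ũ(x)`. -/
def IsStraightSol (N : ℝ → ℝ → ℝ) (a c : ℝ) (m : Mesh) (u u' : ℝ → ℝ) : Prop :=
  (∀ x ∈ Icc a c, HasDerivWithinAt u (u' x) (Icc a c) x) ∧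
  ContinuousOn u' (Icc a c) ∧
  ∀ i < m.n, ∀ x ∈ Icc (m.pt i) (m.pt (i + 1)),
    HasDerivWithinAt u'
      (alphaC N (m.pt i) (u' (m.pt i)) (u (m.pt i)) x * u x)
      (Icc (m.pt i) (m.pt (i + 1))) x

/-- An inverse scheme solution on `[s, ub]` with respect to the mesh `m` (shifted by `s`):
`x̃ ∈ C¹([s,ub])` and on each subinterval `[ū_i, ū_{i+1}]` the second derivative of `x̃`
equals `β_i(x̃'(ū_i), x̃(ū_i), v)·(x̃'(v))³`. -/
def IsInvSol (N : ℝ → ℝ → ℝ) (ub : ℝ) (m : Mesh) (s : ℝ) (X X' : ℝ → ℝ) : Prop :=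
  (∀ v ∈ Icc s ub, HasDerivWithinAt X (X' v) (Icc s ub) v) ∧
  ContinuousOn X' (Icc s ub) ∧
  ∀ i < m.n, ∀ v ∈ Icc (ubar m s i) (ubar m s (i + 1)),
    HasDerivWithinAt X'
      (betaC N (ubar m s i) (X' (ubar m s i)) (X (ubar m s i)) v * (X' v) ^ 3)
      (Icc (ubar m s i) (ubar m s (i + 1))) v

/-- A scheme pair `(ũ, x̃)`. -/
def IsSchemePair (N : ℝ → ℝ → ℝ) (a b c ub : ℝ) (ms mi : Mesh)
    (u u' X X' : ℝ → ℝ) : Prop :=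
  IsStraightSol N a c ms u u' ∧ u a = 0 ∧ 0 < u c ∧ u c < ub ∧ u' c ≠ 0 ∧
  IsInvSol N ub mi (u c) X X' ∧ X ub = b ∧ X (u c) = c ∧ X' (u c) = 1 / u' c

/-- A scheme pair additionally satisfying the sign inequalities
`0 < ũ < u_b`, `ũ' > 0`, `ũ'' ≥ 0` on `(a,c]`, and `c < x̃`, `x̃' > 0`, `x̃'' ≤ 0`
on `(ũ(c), u_b]` (second derivatives taken on the mesh subintervals). -/
def GoodPair (N : ℝ → ℝ → ℝ) (a b c ub : ℝ) (ms mi : Mesh)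
    (u u' X X' : ℝ → ℝ) : Prop :=
  IsSchemePair N a b c ub ms mi u u' X X' ∧
  (∀ x ∈ Ioc a c, 0 < u x ∧ u x < ub ∧ 0 < u' x) ∧
  (∀ i < ms.n, ∀ x ∈ Icc (ms.pt i) (ms.pt (i + 1)), x ∈ Ioc a c →
    0 ≤ alphaC N (ms.pt i) (u' (ms.pt i)) (u (ms.pt i)) x * u x) ∧
  (∀ v ∈ Ioc (u c) ub, c < X v ∧ 0 < X' v) ∧
  (∀ i < mi.n, ∀ v ∈ Icc (ubar mi (u c) i) (ubar mi (u c) (i + 1)), v ∈ Ioc (u c) ub →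
    betaC N (ubar mi (u c) i) (X' (ubar mi (u c) i)) (X (ubar mi (u c) i)) v * (X' v) ^ 3 ≤ 0)

/-- All steps of the straight mesh `ms` and of the (shifted) inverse mesh `mi`
are of size at most `h`. -/
def StepLe (ms mi : Mesh) (s h : ℝ) : Prop :=
  (∀ i < ms.n, ms.pt (i + 1) - ms.pt i ≤ h) ∧
  (∀ i < mi.n, ubar mi s (i + 1) - ubar mi s i ≤ h)

/-! ### Gluing differentiable functions along a mesh -/

section Glue

variable {E : Type*} [NormedAddCommGroup E] [NormedSpace ℝ E]

/-- Two functions differentiable on adjacent intervals glue to a differentiable function when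
their values and derivatives agree at the common endpoint. -/
lemma hasDerivWithinAt_ite_le {p q r : ℝ} (hpq : p ≤ q) (hqr : q ≤ r) {f g f' g' : ℝ → E}
    (hf : ∀ x ∈ Icc p q, HasDerivWithinAt f (f' x) (Icc p q) x)
    (hg : ∀ x ∈ Icc q r, HasDerivWithinAt g (g' x) (Icc q r) x)
    (hv : f q = g q) (hd : f' q = g' q) {x : ℝ} (hx : x ∈ Icc p r) :
    HasDerivWithinAt (fun y => if y ≤ q then f y else g y)
      (if x ≤ q then f' x else g' x) (Icc p r) x := by
  have left : ∀ y ∈ Icc p q, (if y ≤ q then f y else g y) = f y := fun y hy => if_pos hy.2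
  have right : ∀ y ∈ Icc q r, (if y ≤ q then f y else g y) = g y := by
    intro y hy
    rcases hy.1.eq_or_lt with rfl | h
    · simp [hv]
    · exact if_neg h.not_ge
  rw [← Icc_union_Icc_eq_Icc hpq hqr]
  rcases lt_trichotomy x q with h | rfl | h
  · rw [if_pos h.le]
    refine ((hf x ⟨hx.1, h.le⟩).congr_of_mem left ⟨hx.1, h.le⟩).union ?_
    exact hasDerivWithinAt_iff_hasFDerivWithinAt.2 <| .of_notMem_closure <| by
      rw [isClosed_Icc.closure_eq]; exact fun hm => h.not_ge hm.1
  · rw [if_pos le_rfl]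
    refine ((hf x ⟨hpq, le_rfl⟩).congr_of_mem left ⟨hpq, le_rfl⟩).union ?_
    rw [hd]
    exact (hg x ⟨le_rfl, hqr⟩).congr_of_mem right ⟨le_rfl, hqr⟩
  · rw [if_neg h.not_ge]
    refine HasDerivWithinAt.union ?_
      ((hg x ⟨h.le, hx.2⟩).congr_of_mem right ⟨h.le, hx.2⟩)
    exact hasDerivWithinAt_iff_hasFDerivWithinAt.2 <| .of_notMem_closure <| by
      rw [isClosed_Icc.closure_eq]; exact fun hm => h.not_ge hm.2

lemma exists_mem_cell (t : ℕ → ℝ) {n : ℕ} (hn : 0 < n) {x : ℝ} (hx : x ∈ Icc (t 0) (t n)) :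
    ∃ i < n, x ∈ Icc (t i) (t (i + 1)) := by
  induction n, hn using Nat.le_induction with
  | base => exact ⟨0, one_pos, hx⟩
  | succ n _ ih =>
    rcases le_total x (t n) with h | h
    · obtain ⟨i, hi, hxi⟩ := ih ⟨hx.1, h⟩
      exact ⟨i, by omega, hxi⟩
    · exact ⟨n, n.lt_succ_self, h, hx.2⟩

/-- Functions `f i` with continuous derivatives `g i` on the cells `[t i, t (i + 1)]` glue to a
`C¹` function when values and derivatives match at the knots. -/
lemma exists_glue (t : ℕ → ℝ) (f g : ℕ → ℝ → E) (n : ℕ) (ht : ∀ i < n, t i ≤ t (i + 1))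
    (hf : ∀ i < n, ∀ x ∈ Icc (t i) (t (i + 1)),
      HasDerivWithinAt (f i) (g i x) (Icc (t i) (t (i + 1))) x)
    (hg : ∀ i < n, ContinuousOn (g i) (Icc (t i) (t (i + 1))))
    (hfm : ∀ i < n, f i (t (i + 1)) = f (i + 1) (t (i + 1)))
    (hgm : ∀ i < n, g i (t (i + 1)) = g (i + 1) (t (i + 1))) :
    ∃ F G : ℝ → E, (∀ x ∈ Icc (t 0) (t n), HasDerivWithinAt F (G x) (Icc (t 0) (t n)) x) ∧
      ContinuousOn G (Icc (t 0) (t n)) ∧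
      (∀ i < n, EqOn F (f i) (Icc (t i) (t (i + 1))) ∧ EqOn G (g i) (Icc (t i) (t (i + 1)))) ∧
      F (t 0) = f 0 (t 0) ∧ G (t 0) = g 0 (t 0) ∧ F (t n) = f n (t n) ∧ G (t n) = g n (t n) ∧
      t 0 ≤ t n ∧ ∀ i ≤ n, t i ≤ t n := by
  induction n with
  | zero =>
    refine ⟨f 0, g 0, fun x hx => ?_, ?_, by simp, rfl, rfl, rfl, rfl, le_rfl, by simp⟩
    · rw [Icc_self] at hx ⊢
      obtain rfl := hx
      exact hasDerivWithinAt_iff_hasFDerivWithinAt.2 <| .of_subsingleton subsingleton_singleton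
    · simp
  | succ n ih =>
    obtain ⟨F, G, hF, hG, hFG, hF0, hG0, hFn, hGn, h0n, hin⟩ := ih
      (fun i hi => ht i (by omega)) (fun i hi => hf i (by omega)) (fun i hi => hg i (by omega))
      (fun i hi => hfm i (by omega)) (fun i hi => hgm i (by omega))
    have hn := ht n (by omega)
    have right (F₁ : ℝ → E) (f₁ : ℝ → E) (h : F₁ (t n) = f₁ (t n)) :
        EqOn (fun x => if x ≤ t n then F₁ x else f₁ x) f₁ (Icc (t n) (t (n + 1))) := by
      intro y hy
      rcases hy.1.eq_or_lt with rfl | h'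
      · simp [h]
      · exact if_neg h'.not_ge
    refine ⟨fun x => if x ≤ t n then F x else f n x, fun x => if x ≤ t n then G x else g n x,
      fun x hx => hasDerivWithinAt_ite_le h0n hn hF (hf n (by omega)) hFn hGn hx, ?_, ?_,
      by simp [h0n, hF0], by simp [h0n, hG0], ?_, ?_, h0n.trans hn, ?_⟩
    · rw [← Icc_union_Icc_eq_Icc h0n hn]
      refine ContinuousOn.union_of_isClosed ?_ ?_ isClosed_Icc isClosed_Icc
      · exact hG.congr fun y hy => if_pos hy.2
      · exact (hg n (by omega)).congr (right G (g n) hGn)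
    · intro i hi
      rcases Nat.lt_succ_iff_lt_or_eq.1 hi with h | rfl
      · have : ∀ y ∈ Icc (t i) (t (i + 1)), y ≤ t n := fun y hy => hy.2.trans (hin _ (by omega))
        exact ⟨fun y hy => (if_pos (this y hy)).trans ((hFG i h).1 hy),
          fun y hy => (if_pos (this y hy)).trans ((hFG i h).2 hy)⟩
      · exact ⟨right F (f i) hFn, right G (g i) hGn⟩
    · exact (right F (f n) hFn ⟨hn, le_rfl⟩).trans (hfm n (by omega))
    · exact (right G (g n) hGn ⟨hn, le_rfl⟩).trans (hgm n (by omega))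
    · intro i hi
      rcases Nat.le_succ_iff.1 hi with h | rfl
      · exact (hin i h).trans hn
      · exact le_rfl

end Glue

/-! ### Global existence for Lipschitz vector fields -/

section LipschitzODE

open scoped NNReal

variable {E : Type*} [NormedAddCommGroup E] [NormedSpace ℝ E] [CompleteSpace E]

/-- A globally `K`-Lipschitz vector field has solutions on every time interval of length at most
`1 / (K + 1)`. -/
lemma exists_hasDerivWithinAt_of_lipschitz_short {f : ℝ → E → E} {K : ℝ≥0} {p q : ℝ}
    (hpq : p ≤ q) (hlen : (K + 1) * (q - p) ≤ 1) (hlip : ∀ t ∈ Icc p q, LipschitzWith K (f t))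
    (hcont : ∀ x, ContinuousOn (f · x) (Icc p q)) (y₀ : E) :
    ∃ y : ℝ → E, y p = y₀ ∧ ∀ t ∈ Icc p q, HasDerivWithinAt y (f t (y t)) (Icc p q) t := by
  obtain ⟨B, hB⟩ := isCompact_Icc.exists_bound_of_continuousOn (hcont y₀)
  have hB0 : 0 ≤ B := (norm_nonneg _).trans (hB p ⟨le_rfl, hpq⟩)
  lift B to ℝ≥0 using hB0
  have hPL : IsPicardLindelof f (⟨p, le_rfl, hpq⟩ : Icc p q) y₀ B 0 (B + K * B) K :=
    { lipschitzOnWith := fun t ht => (hlip t ht).lipschitzOnWith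
      continuousOn := fun x _ => hcont x
      norm_le := fun t ht x hx => by
        have h1 := (hlip t ht).norm_sub_le x y₀
        have h2 := hB t ht
        have h3 : ‖x - y₀‖ ≤ B := by simpa [dist_eq_norm] using hx
        have h4 : ‖f t x‖ ≤ ‖f t x - f t y₀‖ + ‖f t y₀‖ := by
          simpa using norm_add_le (f t x - f t y₀) (f t y₀)
        have h5 : (K : ℝ) * ‖x - y₀‖ ≤ K * B := by gcongr
        push_cast
        linarith
      mul_max_le := by
        simp only [sub_self, NNReal.coe_zero, sub_zero]
        rw [max_eq_left (by linarith)]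
        push_cast
        nlinarith [B.2] }
  exact hPL.exists_eq_forall_mem_Icc_hasDerivWithinAt₀

/-- A globally Lipschitz vector field has solutions on every compact time interval. -/
lemma exists_hasDerivWithinAt_of_lipschitz {f : ℝ → E → E} {K : ℝ≥0} {p q : ℝ}
    (hpq : p ≤ q) (hlip : ∀ t ∈ Icc p q, LipschitzWith K (f t))
    (hcont : ∀ x, ContinuousOn (f · x) (Icc p q)) (y₀ : E) :
    ∃ y : ℝ → E, y p = y₀ ∧ ∀ t ∈ Icc p q, HasDerivWithinAt y (f t (y t)) (Icc p q) t := by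
  obtain ⟨n, hn⟩ := exists_nat_gt ((K + 1) * (q - p))
  have hn0 : (0 : ℝ) < n := lt_of_le_of_lt (by have := K.2; have := sub_nonneg.2 hpq; positivity) hn
  set t : ℕ → ℝ := fun i => p + i * ((q - p) / n) with ht
  have hstep : 0 ≤ (q - p) / n := div_nonneg (sub_nonneg.2 hpq) hn0.le
  have ht0 : t 0 = p := by simp [ht]
  have htn : t n = q := by simp only [ht]; field_simp; ring
  have htmono : Monotone t := fun i j hij => by
    simp only [ht]; gcongr
  have hsub : ∀ i < n, Icc (t i) (t (i + 1)) ⊆ Icc p q := fun i hi =>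
    Icc_subset_Icc (ht0 ▸ htmono (Nat.zero_le i)) (htn ▸ htmono hi)
  have hlen : ∀ i, (K + 1) * (t (i + 1) - t i) ≤ (1 : ℝ) := fun i => by
    have : t (i + 1) - t i = (q - p) / n := by simp only [ht]; push_cast; ring
    rw [this, ← mul_div_assoc, div_le_one hn0]
    exact hn.le
  have key : ∀ (i : ℕ) (z : E), ∃ y : ℝ → E, y (t i) = z ∧ (i < n → ∀ x ∈ Icc (t i) (t (i + 1)),
      HasDerivWithinAt y (f x (y x)) (Icc (t i) (t (i + 1))) x) := by
    intro i z
    by_cases hi : i < n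
    · obtain ⟨y, hy, hy'⟩ := exists_hasDerivWithinAt_of_lipschitz_short (htmono i.le_succ) (hlen i)
        (fun s hs => hlip s (hsub i hi hs)) (fun x => (hcont x).mono (hsub i hi)) z
      exact ⟨y, hy, fun _ => hy'⟩
    · exact ⟨fun _ => z, rfl, fun h => absurd h hi⟩
  choose Y hY0 hY using key
  let st : ℕ → E := fun i => Nat.rec y₀ (fun i z => Y i z (t (i + 1))) i
  have hjoint : ContinuousOn (fun z : ℝ × E => f z.1 z.2) (Icc p q ×ˢ univ) :=
    continuousOn_prod_of_continuousOn_lipschitzOnWith' _ K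
      (fun s hs => (hlip s hs).lipschitzOnWith) (fun x _ => hcont x)
  obtain ⟨F, G, hF, -, hFG, hF0, -, -, -, -, -⟩ := exists_glue t (fun i => Y i (st i))
    (fun i x => f x (Y i (st i) x)) n (fun i _ => htmono i.le_succ)
    (fun i hi => hY i (st i) hi)
    (fun i hi => hjoint.comp (continuousOn_id.prodMk (HasDerivWithinAt.continuousOn (hY i (st i) hi)))
      fun x hx => ⟨hsub i hi hx, mem_univ _⟩)
    (fun i _ => (hY0 (i + 1) (st (i + 1))).symm)
    (fun i _ => by
      have : Y (i + 1) (st (i + 1)) (t (i + 1)) = Y i (st i) (t (i + 1)) :=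
        hY0 (i + 1) (st (i + 1))
      simp only [this])
  have hn1 : 0 < n := by exact_mod_cast hn0
  rw [ht0, htn] at hF
  refine ⟨F, ?_, fun x hx => ?_⟩
  · rw [← ht0, hF0]
    exact hY0 0 (st 0)
  · obtain ⟨i, hi, hxi⟩ := exists_mem_cell t hn1 (by rwa [ht0, htn])
    refine (hF x hx).congr_deriv ?_
    rw [(hFG i hi).2 hxi, (hFG i hi).1 hxi]

end LipschitzODE

/-! ### Regularity of the nonlinearity -/

section Regularity

variable {N : ℝ → ℝ → ℝ}

lemma hasDerivAt_pd1 (hN : ContDiff ℝ 2 (Function.uncurry N)) (u x : ℝ) :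
    HasDerivAt (fun t => N t x) (pd1 N u x) u := by
  have h : Differentiable ℝ (fun t => N t x) :=
    (hN.differentiable (by norm_num)).comp
      (differentiable_id.prodMk (differentiable_const x))
  exact (h u).hasDerivAt

lemma hasDerivAt_pd2 (hN : ContDiff ℝ 2 (Function.uncurry N)) (u x : ℝ) :
    HasDerivAt (fun s => N u s) (pd2 N u x) x := by
  have h : Differentiable ℝ (fun s => N u s) :=
    (hN.differentiable (by norm_num)).comp
      ((differentiable_const u).prodMk differentiable_id)
  exact (h x).hasDerivAt

lemma continuous_pd1 (hN : ContDiff ℝ 2 (Function.uncurry N)) :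
    Continuous fun z : ℝ × ℝ => pd1 N z.1 z.2 := by
  have h : (fun z : ℝ × ℝ => pd1 N z.1 z.2) =
      fun z => fderiv ℝ (Function.uncurry N) z (1, 0) := by
    funext z
    have h1 := ((hN.differentiable (by norm_num)) z).hasFDerivAt
    have h2 : HasDerivAt (fun t : ℝ => (t, z.2)) (1, 0) z.1 :=
      (hasDerivAt_id _).prodMk (hasDerivAt_const _ _)
    exact (h1.comp_hasDerivAt z.1 h2).deriv
  rw [h]
  exact (hN.continuous_fderiv (by norm_num)).clm_apply continuous_const

lemma continuous_pd2 (hN : ContDiff ℝ 2 (Function.uncurry N)) :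
    Continuous fun z : ℝ × ℝ => pd2 N z.1 z.2 := by
  have h : (fun z : ℝ × ℝ => pd2 N z.1 z.2) =
      fun z => fderiv ℝ (Function.uncurry N) z (0, 1) := by
    funext z
    have h1 := ((hN.differentiable (by norm_num)) z).hasFDerivAt
    have h2 : HasDerivAt (fun t : ℝ => (z.1, t)) (0, 1) z.2 :=
      (hasDerivAt_const _ _).prodMk (hasDerivAt_id _)
    exact (h1.comp_hasDerivAt z.2 h2).deriv
  rw [h]
  exact (hN.continuous_fderiv (by norm_num)).clm_apply continuous_const

lemma pd1_Ncal (hN : ContDiff ℝ 2 (Function.uncurry N)) (u x : ℝ) :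
    pd1 (Ncal N) u x = pd1 N u x * u + N u x := by
  have h := ((hasDerivAt_pd1 hN u x).mul (hasDerivAt_id u)).deriv
  rw [mul_one] at h
  exact h

lemma pd2_Ncal (hN : ContDiff ℝ 2 (Function.uncurry N)) (u x : ℝ) :
    pd2 (Ncal N) u x = pd2 N u x * u :=
  ((hasDerivAt_pd2 hN u x).mul_const u).deriv

end Regularity

/-! ### The straight scheme -/

lemma Mesh.pt_le_pt (m : Mesh) {i j : ℕ} (hij : i ≤ j) (hj : j ≤ m.n) : m.pt i ≤ m.pt j := by
  induction j, hij using Nat.le_induction with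
  | base => exact le_rfl
  | succ j _ ih => exact (ih (by omega)).trans (m.mono j (by omega)).le

lemma Mesh.cell_subset (m : Mesh) {i : ℕ} (hi : i < m.n) :
    Icc (m.pt i) (m.pt (i + 1)) ⊆ Icc (m.pt 0) (m.pt m.n) :=
  Icc_subset_Icc (m.pt_le_pt (Nat.zero_le i) hi.le) (m.pt_le_pt hi le_rfl)

section LinearFamily

open scoped NNReal

variable {T : Type*} [TopologicalSpace T] [CompactSpace T]

lemma exists_linear_solution (A C q p : C(T, ℝ)) {x₀ x₁ : ℝ} (hx : x₀ ≤ x₁) :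
    ∃ U V : ℝ → C(T, ℝ), U x₀ = q ∧ V x₀ = p ∧
      (∀ x ∈ Icc x₀ x₁, HasDerivWithinAt U (V x) (Icc x₀ x₁) x) ∧
      (∀ x ∈ Icc x₀ x₁,
        HasDerivWithinAt V (((x - x₀) • A + C) * U x) (Icc x₀ x₁) x) := by
  set f : ℝ → C(T, ℝ) × C(T, ℝ) → C(T, ℝ) × C(T, ℝ) :=
    fun t y => (y.2, ((t - x₀) • A + C) * y.1) with hf
  obtain ⟨y, hy0, hy⟩ := exists_hasDerivWithinAt_of_lipschitz (f := f)
    (K := max 1 (Real.toNNReal (x₁ - x₀) * ‖A‖₊ + ‖C‖₊)) hx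
    (fun t ht => by
      refine LipschitzWith.prodMk LipschitzWith.prod_snd (LipschitzWith.of_dist_le_mul ?_)
      intro y z
      rw [dist_eq_norm, dist_eq_norm, ← mul_sub]
      refine (norm_mul_le _ _).trans ?_
      push_cast
      rw [Real.coe_toNNReal _ (sub_nonneg.2 hx)]
      have h1 : ‖(t - x₀) • A + C‖ ≤ (x₁ - x₀) * ‖A‖ + ‖C‖ := by
        refine (norm_add_le _ _).trans ?_
        rw [norm_smul, Real.norm_of_nonneg (sub_nonneg.2 ht.1)]
        gcongr
        exact ht.2
      have h2 : ‖y.1 - z.1‖ ≤ ‖y - z‖ := norm_fst_le (y - z)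
      gcongr)
    (fun z => by fun_prop) (q, p)
  refine ⟨fun x => (y x).1, fun x => (y x).2, by simp [hy0], by simp [hy0], fun x hx => ?_,
    fun x hx => ?_⟩
  · exact (ContinuousLinearMap.fst ℝ C(T, ℝ) C(T, ℝ)).hasFDerivAt.comp_hasDerivWithinAt x (hy x hx)
  · exact (ContinuousLinearMap.snd ℝ C(T, ℝ) C(T, ℝ)).hasFDerivAt.comp_hasDerivWithinAt x (hy x hx)

/-- Solutions of `u'' = (A (x - x₀) + C) u` with continuously varying coefficients and initial
data, vanishing identically for the parameters at which the initial data vanish. -/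
lemma exists_linear_solution_vanishing (A C q p : C(T, ℝ)) {x₀ x₁ : ℝ} (hx : x₀ ≤ x₁) :
    ∃ U V : ℝ → C(T, ℝ), U x₀ = q ∧ V x₀ = p ∧
      (∀ x ∈ Icc x₀ x₁, HasDerivWithinAt U (V x) (Icc x₀ x₁) x) ∧
      (∀ x ∈ Icc x₀ x₁,
        HasDerivWithinAt V (((x - x₀) • A + C) * U x) (Icc x₀ x₁) x) ∧
      ∀ k, q k = 0 → p k = 0 → ∀ x, U x k = 0 ∧ V x k = 0 := by
  obtain ⟨U₁, V₁, hU₁, hV₁, hdU₁, hdV₁⟩ := exists_linear_solution A C 1 0 hx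
  obtain ⟨U₂, V₂, hU₂, hV₂, hdU₂, hdV₂⟩ := exists_linear_solution A C 0 1 hx
  refine ⟨fun x => q * U₁ x + p * U₂ x, fun x => q * V₁ x + p * V₂ x, by simp [hU₁, hU₂],
    by simp [hV₁, hV₂], fun x hx => ((hdU₁ x hx).const_mul q).add ((hdU₂ x hx).const_mul p),
    fun x hx => ?_, fun k hq hp x => by simp [hq, hp]⟩
  exact (((hdV₁ x hx).const_mul q).add ((hdV₂ x hx).const_mul p)).congr_deriv (by ring)

/-- The straight scheme solved simultaneously for a compact family of initial slopes `κ`. -/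
lemma exists_straight_family {N : ℝ → ℝ → ℝ} (hN : ContDiff ℝ 2 (Function.uncurry N)) (m : Mesh)
    (κ : C(T, ℝ)) :
    ∃ U V : ℝ → C(T, ℝ),
      (∀ k, IsStraightSol N (m.pt 0) (m.pt m.n) m (fun x => U x k) (fun x => V x k)) ∧
      U (m.pt 0) = 0 ∧ V (m.pt 0) = κ ∧ ∀ k, κ k = 0 → V (m.pt m.n) k = 0 := by
  have key : ∀ (i : ℕ) (s : C(T, ℝ) × C(T, ℝ)), ∃ W : (ℝ → C(T, ℝ)) × (ℝ → C(T, ℝ)),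
      W.1 (m.pt i) = s.1 ∧ W.2 (m.pt i) = s.2 ∧ (i < m.n →
      (∀ x ∈ Icc (m.pt i) (m.pt (i + 1)),
        HasDerivWithinAt W.1 (W.2 x) (Icc (m.pt i) (m.pt (i + 1))) x) ∧
      (∀ x ∈ Icc (m.pt i) (m.pt (i + 1)), ∃ D : C(T, ℝ),
        (∀ k, D k = alphaC N (m.pt i) (s.2 k) (s.1 k) x * W.1 x k) ∧
        HasDerivWithinAt W.2 D (Icc (m.pt i) (m.pt (i + 1))) x) ∧
      ∀ k, s.1 k = 0 → s.2 k = 0 → ∀ x, W.1 x k = 0 ∧ W.2 x k = 0) := by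
    rintro i ⟨q, p⟩
    by_cases hi : i < m.n
    · have c1 := continuous_pd1 hN
      have c2 := continuous_pd2 hN
      have c0 := hN.continuous
      let A : C(T, ℝ) := ⟨fun k => pd1 N (q k) (m.pt i) * p k + pd2 N (q k) (m.pt i), by
        exact ((c1.comp (q.continuous.prodMk continuous_const)).mul p.continuous).add
          (c2.comp (q.continuous.prodMk continuous_const))⟩
      let C : C(T, ℝ) := ⟨fun k => N (q k) (m.pt i),
        c0.comp (q.continuous.prodMk continuous_const)⟩
      obtain ⟨U, V, hU, hV, hdU, hdV, hz⟩ :=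
        exists_linear_solution_vanishing A C q p (m.mono i hi).le
      refine ⟨(U, V), hU, hV, fun _ => ⟨hdU, fun x hx => ⟨_, fun k => ?_, hdV x hx⟩, hz⟩⟩
      change ((x - m.pt i) * (pd1 N (q k) (m.pt i) * p k + pd2 N (q k) (m.pt i))
        + N (q k) (m.pt i)) * U x k = alphaC N (m.pt i) (p k) (q k) x * U x k
      rw [alphaC, mul_comm (x - m.pt i)]
    · exact ⟨(fun _ => q, fun _ => p), rfl, rfl, fun h => absurd h hi⟩
  choose W hW1 hW2 hW using key
  let st : ℕ → C(T, ℝ) × C(T, ℝ) := fun i =>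
    Nat.rec (0, κ) (fun i s => ((W i s).1 (m.pt (i + 1)), (W i s).2 (m.pt (i + 1)))) i
  obtain ⟨U, V, hU, hV, hUV, hU0, hV0, -, hVn, -, -⟩ := exists_glue m.pt (fun i => (W i (st i)).1)
    (fun i => (W i (st i)).2) m.n (fun i hi => (m.mono i hi).le)
    (fun i hi => (hW i (st i) hi).1)
    (fun i hi x hx => by
      obtain ⟨D, -, hD⟩ := (hW i (st i) hi).2.1 x hx
      exact hD.continuousWithinAt)
    (fun i _ => (hW1 (i + 1) (st (i + 1))).symm) (fun i _ => (hW2 (i + 1) (st (i + 1))).symm)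
  have heval : ∀ (k : T) {F : ℝ → C(T, ℝ)} {D : C(T, ℝ)} {s : Set ℝ} {x : ℝ},
      HasDerivWithinAt F D s x → HasDerivWithinAt (fun y => F y k) (D k) s x :=
    fun k F D s x h =>
      (ContinuousMap.evalCLM ℝ k : C(T, ℝ) →L[ℝ] ℝ).hasFDerivAt.comp_hasDerivWithinAt x h
  refine ⟨U, V, fun k => ⟨fun x hx => heval k (hU x hx), fun x hx => ?_, fun i hi x hx => ?_⟩,
    ?_, ?_, ?_⟩
  · exact (ContinuousMap.evalCLM ℝ k).continuous.continuousAt.comp_continuousWithinAt (hV x hx)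
  · obtain ⟨D, hD, hdD⟩ := (hW i (st i) hi).2.1 x hx
    have hle := (m.mono i hi).le
    have h1 := hdD.congr_of_mem (hUV i hi).2 hx
    refine (heval k h1).congr_deriv ?_
    beta_reduce
    rw [hD, (hUV i hi).1 hx, (hUV i hi).1 ⟨le_rfl, hle⟩, (hUV i hi).2 ⟨le_rfl, hle⟩,
      hW1, hW2]
  · exact hU0.trans (hW1 0 (st 0))
  · exact hV0.trans (hW2 0 (st 0))
  · intro k hk
    have hst : ∀ i ≤ m.n, (st i).1 k = 0 ∧ (st i).2 k = 0 := by
      intro i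
      induction i with
      | zero => exact fun _ => ⟨rfl, hk⟩
      | succ i ih =>
        intro hi
        obtain ⟨h1, h2⟩ := ih (by omega)
        exact (hW i (st i) hi).2.2 k h1 h2 (m.pt (i + 1))
    rw [hVn, hW2]
    exact (hst m.n le_rfl).2

end LinearFamily

/-- Convexity and growth of solutions of `u'' = α u` with `α ≥ 0` started at a nonnegative value
with positive slope. -/
lemma convex_growth {x₀ x₁ : ℝ} {u v α : ℝ → ℝ}
    (hu : ∀ x ∈ Icc x₀ x₁, HasDerivWithinAt u (v x) (Icc x₀ x₁) x)
    (hv : ∀ x ∈ Icc x₀ x₁, HasDerivWithinAt v (α x * u x) (Icc x₀ x₁) x)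
    (hα : ∀ x ∈ Icc x₀ x₁, 0 ≤ α x) (hu₀ : 0 ≤ u x₀) (hv₀ : 0 < v x₀) {x : ℝ}
    (hx : x ∈ Icc x₀ x₁) :
    v x₀ ≤ v x ∧ u x₀ + v x₀ * (x - x₀) ≤ u x ∧ u x ≤ u x₀ + v x * (x - x₀) := by
  have h01 : x₀ ≤ x₁ := hx.1.trans hx.2
  have hm0 : x₀ ∈ Icc x₀ x₁ := ⟨le_rfl, h01⟩
  have mono : ∀ {f f' : ℝ → ℝ}, (∀ y ∈ Icc x₀ x₁, HasDerivWithinAt f (f' y) (Icc x₀ x₁) y) →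
      (∀ y ∈ Icc x₀ x₁, 0 ≤ f' y) → MonotoneOn f (Icc x₀ x₁) := fun hf hf' =>
    monotoneOn_of_hasDerivWithinAt_nonneg (convex_Icc _ _) (HasDerivWithinAt.continuousOn hf)
      (fun y hy => (hf y (interior_subset hy)).mono interior_subset)
      (fun y hy => hf' y (interior_subset hy))
  have huv : ∀ y ∈ Icc x₀ x₁, 0 ≤ u y * v y := fun y hy =>
    (mul_nonneg hu₀ hv₀.le).trans <| mono (fun z hz => (hu z hz).mul (hv z hz))
      (fun z hz => by nlinarith [hα z hz, sq_nonneg (v z), mul_nonneg (hα z hz) (sq_nonneg (u z))])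
      hm0 hy hy.1
  have hvsq : ∀ y ∈ Icc x₀ x₁, v x₀ * v x₀ ≤ v y * v y := fun y hy =>
    mono (fun z hz => (hv z hz).mul (hv z hz))
      (fun z hz => by nlinarith [mul_nonneg (hα z hz) (huv z hz)]) hm0 hy hy.1
  have hvcont : ContinuousOn v (Icc x₀ x₁) := HasDerivWithinAt.continuousOn hv
  have hvpos : ∀ y ∈ Icc x₀ x₁, 0 < v y := by
    intro y hy
    by_contra! hneg
    obtain ⟨z, hz, hz0⟩ := intermediate_value_Icc' hy.1
      (hvcont.mono (Icc_subset_Icc_right hy.2)) ⟨hneg, hv₀.le⟩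
    have := hvsq z ⟨hz.1, hz.2.trans hy.2⟩
    rw [hz0] at this
    nlinarith
  have humono := mono hu fun y hy => (hvpos y hy).le
  have hupos : ∀ y ∈ Icc x₀ x₁, 0 ≤ u y := fun y hy => hu₀.trans (humono hm0 hy hy.1)
  have hvmono := mono hv fun y hy => mul_nonneg (hα y hy) (hupos y hy)
  have hlow : MonotoneOn (fun y => u y - v x₀ * (y - x₀)) (Icc x₀ x₁) :=
    mono (f' := fun y => v y - v x₀ * 1)
      (fun y hy => (hu y hy).sub (((hasDerivWithinAt_id _ _).sub_const x₀).const_mul _))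
      fun y hy => by linarith [hvmono hm0 hy hy.1]
  have hupp : MonotoneOn (fun y => v x * (y - x₀) - u y) (Icc x₀ x) :=
    monotoneOn_of_hasDerivWithinAt_nonneg (f' := fun y => v x * 1 - v y) (convex_Icc _ _)
      (by
        have := (HasDerivWithinAt.continuousOn hu).mono (Icc_subset_Icc_right hx.2)
        fun_prop)
      (fun y hy => (((hasDerivWithinAt_id _ _).sub_const x₀).const_mul _).sub
        ((hu y (Icc_subset_Icc_right hx.2 (interior_subset hy))).mono
          (interior_subset.trans (Icc_subset_Icc_right hx.2))))
      (fun y hy => by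
        have hy' := interior_subset hy
        linarith [hvmono ⟨hy'.1, hy'.2.trans hx.2⟩ hx hy'.2])
  have e1 := hlow hm0 hx hx.1
  have e2 := hupp ⟨le_rfl, hx.1⟩ ⟨hx.1, le_rfl⟩ hx.1
  simp only [sub_self, mul_zero] at e1 e2
  exact ⟨hvmono hm0 hx hx.1, by linarith, by linarith⟩

lemma alphaC_nonneg {N : ℝ → ℝ → ℝ} {a b xi p q x : ℝ} (hH : HypH N a b) (hxi : xi ∈ Icc a b)
    (hp : 0 ≤ p) (hq : 0 ≤ q) (hx : xi ≤ x) : 0 ≤ alphaC N xi p q x := by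
  obtain ⟨h0, h2, h1, -, -⟩ := hH q hq xi hxi
  have := sub_nonneg.2 hx
  unfold alphaC
  positivity

/-- Growth bounds for a straight scheme solution started from zero with positive slope. -/
lemma IsStraightSol.growth {N : ℝ → ℝ → ℝ} {b k : ℝ} {m : Mesh} {u v : ℝ → ℝ}
    (hsol : IsStraightSol N (m.pt 0) (m.pt m.n) m u v) (hH : HypH N (m.pt 0) b)
    (hb : m.pt m.n ≤ b) (hu : u (m.pt 0) = 0) (hv : v (m.pt 0) = k) (hk : 0 < k) {x : ℝ}
    (hx : x ∈ Icc (m.pt 0) (m.pt m.n)) :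
    k ≤ v x ∧ k * (x - m.pt 0) ≤ u x ∧ u x ≤ v x * (x - m.pt 0) := by
  suffices h : ∀ j ≤ m.n, ∀ y ∈ Icc (m.pt 0) (m.pt j),
      k ≤ v y ∧ k * (y - m.pt 0) ≤ u y ∧ u y ≤ v y * (y - m.pt 0) from h m.n le_rfl x hx
  intro j
  induction j with
  | zero =>
    intro _ y hy
    obtain rfl : y = m.pt 0 := by simpa using hy
    simp [hu, hv]
  | succ j ih =>
    intro hj y hy
    by_cases hyj : y ≤ m.pt j
    · exact ih (by omega) y ⟨hy.1, hyj⟩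
    have h0j := m.pt_le_pt (Nat.zero_le j) (by omega)
    obtain ⟨e1, e2, e3⟩ := ih (by omega) (m.pt j) ⟨h0j, le_rfl⟩
    have huj : 0 ≤ u (m.pt j) := le_trans (mul_nonneg hk.le (sub_nonneg.2 h0j)) e2
    have hyc : y ∈ Icc (m.pt j) (m.pt (j + 1)) := ⟨(not_le.1 hyj).le, hy.2⟩
    have hsub := m.cell_subset (i := j) (by omega)
    obtain ⟨g1, g2, g3⟩ := convex_growth
      (fun z hz => (hsol.1 z (hsub hz)).mono hsub) (hsol.2.2 j (by omega))
      (fun z hz => alphaC_nonneg hH ⟨h0j, (m.pt_le_pt (by omega) le_rfl).trans hb⟩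
        (hk.le.trans e1) huj hz.1) huj (hk.trans_le e1) hyc
    have hd := sub_nonneg.2 hyc.1
    have hd0 := sub_nonneg.2 h0j
    refine ⟨e1.trans g1, ?_, ?_⟩
    · nlinarith [mul_le_mul_of_nonneg_right e1 hd]
    · nlinarith [mul_le_mul_of_nonneg_right g1 hd0]

/-! ### The inverse scheme -/

/-- Projection of `q` onto `[a, b]`. -/
def clampIcc (a b q : ℝ) : ℝ := max a (min q b)

/-- Minus the linear coefficient of `betaC` at a knot `u` with value `q` and slope `1 / p`, the
position `q` being projected onto `[a, b]`. -/
def invLin (N : ℝ → ℝ → ℝ) (a b u q p : ℝ) : ℝ :=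
  pd1 (Ncal N) u (clampIcc a b q) + pd2 (Ncal N) u (clampIcc a b q) * p⁻¹

/-- Minus the constant coefficient of `betaC` at a knot `u` with value `q`, the position `q`
being projected onto `[a, b]`. -/
def invConst (N : ℝ → ℝ → ℝ) (a b u q : ℝ) : ℝ := Ncal N u (clampIcc a b q)

/-- The reciprocal slope `1 / x'` at distance `t` from a knot: the equation
`x'' = -(A t + C) (x')³` integrates to `(1 / x')² = p² + A t² + 2 C t`. -/
def recSlope (p A C t : ℝ) : ℝ := √(p ^ 2 + A * max t 0 ^ 2 + 2 * C * max t 0)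

/-- Values and reciprocal slopes at the knots `ubar m s i` of the inverse scheme, with positions
projected onto `[a, b]` in the coefficients, started at `s` with value `c` and reciprocal
slope `p`. -/
def invState (N : ℝ → ℝ → ℝ) (a b : ℝ) (m : Mesh) (s c p : ℝ) : ℕ → ℝ × ℝ
  | 0 => (c, p)
  | i + 1 =>
    let z := invState N a b m s c p i
    let A := invLin N a b (ubar m s i) z.1 z.2
    let C := invConst N a b (ubar m s i) z.1
    let h := ubar m s (i + 1) - ubar m s i
    (z.1 + ∫ t in (0 : ℝ)..h, (recSlope z.2 A C t)⁻¹, recSlope z.2 A C h)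

section Inverse

variable {N : ℝ → ℝ → ℝ} {a b : ℝ}

lemma clampIcc_mem (hab : a ≤ b) (q : ℝ) : clampIcc a b q ∈ Icc a b :=
  ⟨le_max_left _ _, max_le hab (min_le_right _ _)⟩

lemma clampIcc_of_mem {q : ℝ} (hq : q ∈ Icc a b) : clampIcc a b q = q := by
  rw [clampIcc, min_eq_left hq.2, max_eq_right hq.1]

lemma invLin_nonneg (hN : ContDiff ℝ 2 (Function.uncurry N)) (hH : HypH N a b) (hab : a ≤ b)
    {u p : ℝ} (q : ℝ) (hu : 0 ≤ u) (hp : 0 < p) : 0 ≤ invLin N a b u q p := by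
  obtain ⟨h0, h2, h1, -, -⟩ := hH u hu _ (clampIcc_mem hab q)
  rw [invLin, pd1_Ncal hN, pd2_Ncal hN]
  positivity

lemma invConst_nonneg (hH : HypH N a b) (hab : a ≤ b) {u : ℝ} (q : ℝ) (hu : 0 ≤ u) :
    0 ≤ invConst N a b u q :=
  mul_nonneg (hH u hu _ (clampIcc_mem hab q)).1 hu

lemma recSlope_pos {p A C : ℝ} (hp : 0 < p) (hA : 0 ≤ A) (hC : 0 ≤ C) (t : ℝ) :
    0 < recSlope p A C t := by
  have : 0 ≤ max t 0 := le_max_right _ _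
  exact Real.sqrt_pos.2 (by positivity)

lemma recSlope_zero {p : ℝ} (hp : 0 < p) (A C : ℝ) : recSlope p A C 0 = p := by
  simp [recSlope, Real.sqrt_sq hp.le]

lemma continuous_recSlope_inv {p A C : ℝ} (hp : 0 < p) (hA : 0 ≤ A) (hC : 0 ≤ C) :
    Continuous fun t => (recSlope p A C t)⁻¹ := by
  have h : Continuous (recSlope p A C) := by unfold recSlope; fun_prop
  exact h.inv₀ fun t => (recSlope_pos hp hA hC t).ne'

lemma hasDerivWithinAt_recSlope_inv {p A C : ℝ} (hp : 0 < p) (hA : 0 ≤ A) (hC : 0 ≤ C)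
    {v₀ v₁ v : ℝ} (hv : v ∈ Icc v₀ v₁) :
    HasDerivWithinAt (fun w => (recSlope p A C (w - v₀))⁻¹)
      ((-A * (v - v₀) - C) * (recSlope p A C (v - v₀))⁻¹ ^ 3) (Icc v₀ v₁) v := by
  have hval : ∀ w ∈ Icc v₀ v₁,
      recSlope p A C (w - v₀) = √(p ^ 2 + A * (w - v₀) ^ 2 + 2 * C * (w - v₀)) := by
    intro w hw
    rw [recSlope, max_eq_left (sub_nonneg.2 hw.1)]
  have hpos : 0 < p ^ 2 + A * (v - v₀) ^ 2 + 2 * C * (v - v₀) := by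
    have := sub_nonneg.2 hv.1
    positivity
  have hd : HasDerivAt (fun w => p ^ 2 + A * (w - v₀) ^ 2 + 2 * C * (w - v₀))
      (2 * (A * (v - v₀) + C)) v := by
    have h0 : HasDerivAt (fun w : ℝ => w - v₀) 1 v := (hasDerivAt_id v).sub_const v₀
    exact ((((h0.pow 2).const_mul A).const_add (p ^ 2)).add (h0.const_mul (2 * C))).congr_deriv
      (by push_cast; ring)
  have hs := Real.sqrt_pos.2 hpos
  refine (((hd.sqrt hpos.ne').inv hs.ne').hasDerivWithinAt.congr_of_mem
    (fun w hw => by rw [hval w hw]; rfl) hv).congr_deriv ?_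
  rw [hval v hv]
  field_simp
  ring

lemma le_ubar (m : Mesh) (s : ℝ) (i : ℕ) : s ≤ ubar m s i := le_max_right _ _

lemma ubar_le_succ (m : Mesh) (s : ℝ) {i : ℕ} (hi : i < m.n) : ubar m s i ≤ ubar m s (i + 1) :=
  max_le_max (m.mono i hi).le le_rfl

lemma invState_snd_pos (hN : ContDiff ℝ 2 (Function.uncurry N)) (hH : HypH N a b) (hab : a ≤ b)
    (m : Mesh) {s p : ℝ} (c : ℝ) (hs : 0 ≤ s) (hp : 0 < p) (i : ℕ) :
    0 < (invState N a b m s c p i).2 := by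
  induction i with
  | zero => exact hp
  | succ i ih =>
    have hu := hs.trans (le_ubar m s i)
    exact recSlope_pos ih (invLin_nonneg hN hH hab _ hu ih) (invConst_nonneg hH hab _ hu) _

lemma invState_fst_le (hN : ContDiff ℝ 2 (Function.uncurry N)) (hH : HypH N a b) (hab : a ≤ b)
    (m : Mesh) {s p : ℝ} (c : ℝ) (hs : 0 ≤ s) (hp : 0 < p) {i j : ℕ} (hij : i ≤ j) (hj : j ≤ m.n) :
    (invState N a b m s c p i).1 ≤ (invState N a b m s c p j).1 := by
  induction j, hij using Nat.le_induction with
  | base => exact le_rfl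
  | succ j _ ih =>
    refine (ih (by omega)).trans (le_add_of_nonneg_right ?_)
    have hu := hs.trans (le_ubar m s j)
    have hz := invState_snd_pos hN hH hab m c hs hp j
    refine intervalIntegral.integral_nonneg (sub_nonneg.2 (ubar_le_succ m s (by omega)))
      fun t _ => inv_nonneg.2 (recSlope_pos hz (invLin_nonneg hN hH hab _ hu hz)
        (invConst_nonneg hH hab _ hu) _).le

lemma invState_fst_of_le (m : Mesh) {s : ℝ} (c p : ℝ) (hs : m.pt m.n ≤ s) {i : ℕ} (hi : i ≤ m.n) :
    (invState N a b m s c p i).1 = c := by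
  have hu : ∀ j ≤ m.n, ubar m s j = s := fun j hj =>
    max_eq_right ((m.pt_le_pt hj le_rfl).trans hs)
  induction i with
  | zero => rfl
  | succ i ih =>
    simp only [invState]
    rw [hu i (by omega), hu (i + 1) hi, sub_self, intervalIntegral.integral_same, add_zero,
      ih (by omega)]

lemma continuous_invState (hN : ContDiff ℝ 2 (Function.uncurry N)) (hH : HypH N a b) (hab : a ≤ b)
    (m : Mesh) (c : ℝ) {T : Type*} [TopologicalSpace T] {s p : T → ℝ}
    (hs : Continuous s) (hp : Continuous p) (hs0 : ∀ k, 0 ≤ s k) (hp0 : ∀ k, 0 < p k) (i : ℕ) :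
    Continuous fun k => invState N a b m (s k) c (p k) i := by
  induction i with
  | zero => exact continuous_const.prodMk hp
  | succ i ih =>
    have hzpos : ∀ k, 0 < (invState N a b m (s k) c (p k) i).2 := fun k =>
      invState_snd_pos hN hH hab m c (hs0 k) (hp0 k) i
    have hu : ∀ j, Continuous fun k => ubar m (s k) j := fun j => by unfold ubar; fun_prop
    have hq : Continuous fun k => clampIcc a b (invState N a b m (s k) c (p k) i).1 := by
      unfold clampIcc; fun_prop
    have huq := (hu i).prodMk hq
    have hN0 := hN.continuous.comp huq
    have hN1 := (continuous_pd1 hN).comp huq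
    have hN2 := (continuous_pd2 hN).comp huq
    have hA : Continuous fun k => invLin N a b (ubar m (s k) i)
        (invState N a b m (s k) c (p k) i).1 (invState N a b m (s k) c (p k) i).2 := by
      simp only [invLin, pd1_Ncal hN, pd2_Ncal hN]
      exact ((hN1.mul (hu i)).add hN0).add
        ((hN2.mul (hu i)).mul (ih.snd.inv₀ fun k => (hzpos k).ne'))
    have hC : Continuous fun k => invConst N a b (ubar m (s k) i)
        (invState N a b m (s k) c (p k) i).1 := hN0.mul (hu i)
    have hW : Continuous fun w : T × ℝ => recSlope (invState N a b m (s w.1) c (p w.1) i).2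
        (invLin N a b (ubar m (s w.1) i) (invState N a b m (s w.1) c (p w.1) i).1
          (invState N a b m (s w.1) c (p w.1) i).2)
        (invConst N a b (ubar m (s w.1) i) (invState N a b m (s w.1) c (p w.1) i).1) w.2 := by
      have h1 := hA.comp (continuous_fst (X := T) (Y := ℝ))
      have h2 := hC.comp (continuous_fst (X := T) (Y := ℝ))
      have h3 := ih.snd.comp (continuous_fst (X := T) (Y := ℝ))
      have h4 : Continuous fun w : T × ℝ => max w.2 0 := by fun_prop
      exact (((h3.pow 2).add (h1.mul (h4.pow 2))).add ((continuous_const.mul h2).mul h4)).sqrt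
    have hh := (hu (i + 1)).sub (hu i)
    refine Continuous.prodMk (ih.fst.add ?_) (hW.comp (continuous_id.prodMk hh))
    refine intervalIntegral.continuous_parametric_intervalIntegral_of_continuous ?_ hh
    refine hW.inv₀ fun w => (recSlope_pos (hzpos _) ?_ ?_ _).ne'
    · exact invLin_nonneg hN hH hab _ ((hs0 _).trans (le_ubar _ _ _)) (hzpos _)
    · exact invConst_nonneg hH hab _ ((hs0 _).trans (le_ubar _ _ _))

/-- A logarithmic lower bound for the advance of the inverse scheme over one cell. -/
lemma log_le_integral_recSlope_inv {p A C R h : ℝ} (hp : 0 < p) (hA : 0 ≤ A) (hC : 0 ≤ C)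
    (hR : 0 < R) (hAR : A ≤ R ^ 2) (hCR : C ≤ R * p) (hh : 0 ≤ h) :
    Real.log (p + R * h) - Real.log p ≤ R * ∫ t in (0 : ℝ)..h, (recSlope p A C t)⁻¹ := by
  have hpos : ∀ t ∈ Icc 0 h, 0 < p + R * t := fun t ht => by
    have := ht.1
    positivity
  have hcont : ContinuousOn (fun t => R * (p + R * t)⁻¹) (Icc 0 h) :=
    continuousOn_const.mul
      (ContinuousOn.inv₀ (by fun_prop) fun t ht => (hpos t ht).ne')
  have hInt : IntervalIntegrable (fun t => R * (p + R * t)⁻¹) MeasureTheory.volume 0 h :=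
    ContinuousOn.intervalIntegrable (by rwa [uIcc_of_le hh])
  have hlog : ∫ t in (0 : ℝ)..h, R * (p + R * t)⁻¹ = Real.log (p + R * h) - Real.log p := by
    rw [intervalIntegral.integral_eq_sub_of_hasDerivAt (f := fun t => Real.log (p + R * t)) _ hInt]
    · simp
    · intro t ht
      rw [uIcc_of_le hh] at ht
      have h0 : HasDerivAt (fun t => p + R * t) (R * 1) t :=
        ((hasDerivAt_id t).const_mul R).const_add p
      exact (h0.log (hpos t ht).ne').congr_deriv (by rw [mul_one, div_eq_mul_inv])
  rw [← hlog, ← intervalIntegral.integral_const_mul]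
  refine intervalIntegral.integral_mono_on hh hInt
    ((continuous_const.mul (continuous_recSlope_inv hp hA hC)).intervalIntegrable _ _)
    fun t ht => ?_
  refine mul_le_mul_of_nonneg_left (inv_anti₀ (recSlope_pos hp hA hC t) ?_) hR.le
  rw [recSlope, max_eq_left ht.1]
  refine Real.sqrt_le_iff.2 ⟨(hpos t ht).le, ?_⟩
  nlinarith [mul_le_mul_of_nonneg_right hAR (sq_nonneg t), mul_le_mul_of_nonneg_right hCR ht.1]

/-- If the projected inverse scheme reaches `b` exactly, it yields an inverse scheme solution with
the required signs. -/
lemma exists_inverse_solution (hN : ContDiff ℝ 2 (Function.uncurry N)) (hH : HypH N a b)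
    (m : Mesh) {ub s c p : ℝ} (hm0 : m.pt 0 = 0) (hmn : m.pt m.n = ub) (hs : 0 < s)
    (hsub : s < ub) (hc : c ∈ Icc a b) (hp : 0 < p)
    (hend : (invState N a b m s c p m.n).1 = b) :
    ∃ X X' : ℝ → ℝ, IsInvSol N ub m s X X' ∧ X ub = b ∧ X s = c ∧ X' s = 1 / p ∧
      (∀ v ∈ Ioc s ub, c < X v ∧ 0 < X' v) ∧
      (∀ i < m.n, ∀ v ∈ Icc (ubar m s i) (ubar m s (i + 1)),
        betaC N (ubar m s i) (X' (ubar m s i)) (X (ubar m s i)) v * X' v ^ 3 ≤ 0) ∧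
      ∀ v ∈ Ioo s ub, X v < b := by
  have hab := hc.1.trans hc.2
  set t := ubar m s with ht
  set z := invState N a b m s c p with hz
  set A : ℕ → ℝ := fun i => invLin N a b (t i) (z i).1 (z i).2 with hAdef
  set C : ℕ → ℝ := fun i => invConst N a b (t i) (z i).1 with hCdef
  have ht0 : t 0 = s := by rw [ht, ubar, hm0, max_eq_right hs.le]
  have htn : t m.n = ub := by rw [ht, ubar, hmn, max_eq_left hsub.le]
  have hpos : ∀ i, 0 < (z i).2 := invState_snd_pos hN hH hab m c hs.le hp
  have hA : ∀ i, 0 ≤ A i := fun i =>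
    invLin_nonneg hN hH hab _ (hs.le.trans (le_ubar m s i)) (hpos i)
  have hC : ∀ i, 0 ≤ C i := fun i => invConst_nonneg hH hab _ (hs.le.trans (le_ubar m s i))
  have hrec : ∀ i r, 0 < recSlope (z i).2 (A i) (C i) r := fun i r =>
    recSlope_pos (hpos i) (hA i) (hC i) r
  have hcont : ∀ i, Continuous fun r => (recSlope (z i).2 (A i) (C i) r)⁻¹ := fun i =>
    continuous_recSlope_inv (hpos i) (hA i) (hC i)
  have hq : ∀ i ≤ m.n, clampIcc a b (z i).1 = (z i).1 := fun i hi =>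
    clampIcc_of_mem ⟨hc.1.trans (invState_fst_le hN hH hab m c hs.le hp (Nat.zero_le i) hi),
      (invState_fst_le hN hH hab m c hs.le hp hi le_rfl).trans hend.le⟩
  obtain ⟨X, X', hX, hX', hcell, hX0, hX'0, hXn, -, -, -⟩ := exists_glue t
    (fun i v => (z i).1 + ∫ r in (0 : ℝ)..(v - t i), (recSlope (z i).2 (A i) (C i) r)⁻¹)
    (fun i v => (recSlope (z i).2 (A i) (C i) (v - t i))⁻¹) m.n
    (fun i hi => ubar_le_succ m s hi)
    (fun i _ v _ => by
      have h1 := (hcont i).integral_hasStrictDerivAt 0 (v - t i) |>.hasDerivAt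
      have h2 := h1.comp v ((hasDerivAt_id v).sub_const (t i))
      rw [mul_one] at h2
      exact (h2.const_add (z i).1).hasDerivWithinAt)
    (fun i _ => ((hcont i).comp (continuous_id.sub continuous_const)).continuousOn)
    (fun i _ => by simp [hz, invState, hAdef, hCdef, ht])
    (fun i _ => by
      rw [sub_self, recSlope_zero (hpos _)]
      rfl)
  have hXi : ∀ i < m.n, X (t i) = (z i).1 := fun i hi => by
    rw [(hcell i hi).1 ⟨le_rfl, ubar_le_succ m s hi⟩]; simp
  have hX'i : ∀ i < m.n, X' (t i) = (z i).2⁻¹ := fun i hi => by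
    rw [(hcell i hi).2 ⟨le_rfl, ubar_le_succ m s hi⟩]; simp [recSlope_zero (hpos _)]
  have hbeta : ∀ i < m.n, ∀ v,
      betaC N (t i) (X' (t i)) (X (t i)) v = -A i * (v - t i) - C i := fun i hi v => by
    simp only [hXi i hi, hX'i i hi, betaC, hAdef, hCdef, invLin, invConst, hq i hi.le]
  have hXpos : ∀ v ∈ Icc s ub, 0 < X' v := fun v hv => by
    obtain ⟨i, hi, hvi⟩ := exists_mem_cell t m.npos (by rwa [ht0, htn])
    rw [(hcell i hi).2 hvi]
    exact inv_pos.2 (hrec i _)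
  rw [ht0, htn] at hX hX'
  have hXs : X s = c := by
    rw [← ht0, hXi 0 m.npos]; rfl
  have hXub : X ub = b := by
    rw [← htn, hXn, ← hend]; simp
  have hmono : StrictMonoOn X (Icc s ub) :=
    strictMonoOn_of_hasDerivWithinAt_pos (convex_Icc _ _) (HasDerivWithinAt.continuousOn hX)
      (fun v hv => (hX v (interior_subset hv)).mono interior_subset)
      (fun v hv => hXpos v (interior_subset hv))
  refine ⟨X, X', ⟨hX, hX', fun i hi v hv => ?_⟩, hXub, hXs, ?_, fun v hv => ⟨?_, ?_⟩,
    fun i hi v hv => ?_, fun v hv => ?_⟩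
  · rw [hbeta i hi, (hcell i hi).2 hv]
    exact (hasDerivWithinAt_recSlope_inv (hpos i) (hA i) (hC i) hv).congr_of_mem (hcell i hi).2 hv
  · rw [← ht0, hX'i 0 m.npos, one_div]; rfl
  · rw [← hXs]
    exact hmono ⟨le_rfl, hsub.le⟩ ⟨hv.1.le, hv.2⟩ hv.1
  · exact hXpos v ⟨hv.1.le, hv.2⟩
  · rw [hbeta i hi, (hcell i hi).2 hv]
    refine mul_nonpos_of_nonpos_of_nonneg ?_ (pow_nonneg (inv_nonneg.2 (hrec i _).le) 3)
    nlinarith [mul_nonneg (hA i) (sub_nonneg.2 hv.1), hC i]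
  · rw [← hXub]
    exact hmono ⟨hv.1.le, hv.2.le⟩ ⟨hsub.le, le_rfl⟩ hv.2

/-- For small initial reciprocal slopes the inverse scheme overshoots `b` within its first cell. -/
lemma exists_overshoot (hN : ContDiff ℝ 2 (Function.uncurry N)) (hH : HypH N a b) (m : Mesh)
    (hm0 : m.pt 0 = 0) {c L : ℝ} (hc : c ∈ Icc a b) (hL : 0 < L) :
    ∃ η > 0, ∀ s p : ℝ, 0 < s → s ≤ p * L → p < η →
      s < m.pt 1 ∧ b < (invState N a b m s c p m.n).1 := by
  have hab := hc.1.trans hc.2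
  have hu1 : 0 < m.pt 1 := hm0 ▸ m.mono 0 m.npos
  have hφ : Continuous fun s => pd1 N s c * s + N s c + pd2 N s c * L := by
    have hsc : Continuous fun s : ℝ => (s, c) := by fun_prop
    exact (((((continuous_pd1 hN).comp hsc).mul continuous_id).add
      (hN.continuous.comp hsc)).add (((continuous_pd2 hN).comp hsc).mul continuous_const))
  obtain ⟨M, hM⟩ := (isCompact_Icc (a := 0) (b := m.pt 1)).exists_bound_of_continuousOn
    hφ.continuousOn
  have hM0 : 0 ≤ M := (norm_nonneg _).trans (hM 0 ⟨le_rfl, hu1.le⟩)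
  set R := 1 + M + M * L with hR
  have hML : 0 ≤ M * L := by positivity
  have hR1 : 1 ≤ R := by linarith
  set d := m.pt 1 / 2 with hd
  have hd0 : 0 < d := by positivity
  refine ⟨min (d / L) (d * Real.exp (-(R * (b - c)))), lt_min (by positivity) (by positivity), ?_⟩
  intro s p hs hsp hpη
  have hp : 0 < p := pos_of_mul_pos_left (hs.trans_le hsp) hL.le
  have hp1 : p * L < d := (lt_div_iff₀ hL).1 (hpη.trans_le (min_le_left _ _))
  have hp2 : p < d * Real.exp (-(R * (b - c))) := hpη.trans_le (min_le_right _ _)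
  have hsd : s < d := hsp.trans_lt hp1
  have hs1 : s < m.pt 1 := by linarith
  refine ⟨hs1, lt_of_lt_of_le ?_ (invState_fst_le hN hH hab m c hs.le hp m.npos le_rfl)⟩
  have ht0 : ubar m s 0 = s := by rw [ubar, hm0, max_eq_right hs.le]
  have ht1 : ubar m s 1 = m.pt 1 := max_eq_left hs1.le
  simp only [invState]
  rw [ht0, zero_add, ht1]
  obtain ⟨h0, h2, h1, -, -⟩ := hH s hs.le c hc
  have hφs := (le_abs_self _).trans (hM s ⟨hs.le, hs1.le⟩)
  have hNM : N s c ≤ M := by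
    have := mul_nonneg h1 hs.le
    have := mul_nonneg h2 hL.le
    linarith
  have hA : invLin N a b s c p ≤ R ^ 2 := by
    rw [invLin, clampIcc_of_mem hc, pd1_Ncal hN, pd2_Ncal hN, mul_assoc]
    have : s * p⁻¹ ≤ L := by
      rw [← div_eq_mul_inv, div_le_iff₀ hp]; linarith
    have := mul_le_mul_of_nonneg_left this h2
    nlinarith
  have hC : invConst N a b s c ≤ R * p := by
    rw [invConst, clampIcc_of_mem hc, Ncal]
    calc N s c * s ≤ M * (p * L) := mul_le_mul hNM hsp hs.le hM0
      _ = (M * L) * p := by ring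
      _ ≤ R * p := by gcongr; linarith
  have hlog := log_le_integral_recSlope_inv hp (invLin_nonneg hN hH hab c hs.le hp)
    (invConst_nonneg hH hab c hs.le) (by linarith) hA hC (sub_nonneg.2 hs1.le)
  have hlp : Real.log p < Real.log d - R * (b - c) := by
    have := Real.log_lt_log hp hp2
    rwa [Real.log_mul hd0.ne' (Real.exp_ne_zero _), Real.log_exp, ← sub_eq_add_neg] at this
  have hld : Real.log d ≤ Real.log (p + R * (m.pt 1 - s)) := by
    refine Real.log_le_log hd0 ?_
    nlinarith
  have : R * (b - c) < R * ∫ t in (0 : ℝ)..(m.pt 1 - s),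
      (recSlope p (invLin N a b s c p) (invConst N a b s c) t)⁻¹ := by linarith
  have := lt_of_mul_lt_mul_left this (by linarith)
  linarith

end Inverse


/-- Shooting in the initial slope: some positive slope makes the straight scheme end below
`ub` and the inverse scheme continuing it reach exactly `b`. -/
lemma exists_shooting_slope {N : ℝ → ℝ → ℝ} (hN : ContDiff ℝ 2 (Function.uncurry N))
    {b ub : ℝ} (hub : 0 < ub) {ms mi : Mesh} (hH : HypH N (ms.pt 0) b)
    (hac : ms.pt 0 < ms.pt ms.n) (hcb : ms.pt ms.n < b) (hm0 : mi.pt 0 = 0)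
    (hmn : mi.pt mi.n = ub) :
    ∃ k > 0, ∃ u u' : ℝ → ℝ, IsStraightSol N (ms.pt 0) (ms.pt ms.n) ms u u' ∧
      u (ms.pt 0) = 0 ∧ u' (ms.pt 0) = k ∧ u (ms.pt ms.n) < ub ∧
      (invState N (ms.pt 0) b mi (u (ms.pt ms.n)) (ms.pt ms.n) (u' (ms.pt ms.n)) mi.n).1 = b := by
  set a := ms.pt 0
  set c := ms.pt ms.n
  have hL : 0 < c - a := sub_pos.2 hac
  have hK : 0 < ub / (c - a) := div_pos hub hL
  set K := ub / (c - a) with hKdef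
  let κ : C(Icc (0 : ℝ) K, ℝ) := ⟨Subtype.val, continuous_subtype_val⟩
  obtain ⟨U, V, hsol, hU, hV, hV0⟩ := exists_straight_family hN ms κ
  have hgrow : ∀ k : Icc (0 : ℝ) K, 0 < k.1 →
      k.1 ≤ V c k ∧ k.1 * (c - a) ≤ U c k ∧ U c k ≤ V c k * (c - a) := fun k hk =>
    (hsol k).growth hH hcb.le (by simp [hU]) (by simp [hV, κ]) hk ⟨hac.le, le_rfl⟩
  obtain ⟨η, hη, hover⟩ := exists_overshoot hN hH mi hm0 ⟨hac.le, hcb.le⟩ hL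
  obtain ⟨δ, hδ, hcont⟩ := Metric.continuous_iff.1 (V c).continuous ⟨0, le_rfl, hK.le⟩ η hη
  have hk0 : 0 < min (δ / 2) K := lt_min (half_pos hδ) hK
  set k₀ := min (δ / 2) K with hk0def
  have hk0K : k₀ ≤ K := min_le_right _ _
  let ι : Icc k₀ K → Icc (0 : ℝ) K := fun k => ⟨k.1, hk0.le.trans k.2.1, k.2.2⟩
  have hι : Continuous ι := by fun_prop
  have hpos : ∀ k, 0 < (ι k).1 := fun k => hk0.trans_le k.2.1
  have hS : ∀ k, 0 < U c (ι k) := fun k => (mul_pos (hpos k) hL).trans_le (hgrow _ (hpos k)).2.1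
  have hP : ∀ k, 0 < V c (ι k) := fun k => (hpos k).trans_le (hgrow _ (hpos k)).1
  let F : Icc k₀ K → ℝ := fun k =>
    (invState N a b mi (min (U c (ι k)) ub) c (V c (ι k)) mi.n).1
  have hF : Continuous F := by
    refine (continuous_invState hN hH (hac.le.trans hcb.le) mi c ?_ ?_ ?_ hP mi.n).fst
    · exact ((U c).continuous.comp hι).min continuous_const
    · exact (V c).continuous.comp hι
    · exact fun k => le_min (hS k).le hub.le
  have hFc : ∀ k, ub ≤ U c (ι k) → F k = c := fun k hk =>
    invState_fst_of_le mi c _ (by rw [min_eq_right hk, hmn]) le_rfl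
  have : PreconnectedSpace (Icc k₀ K) := Subtype.preconnectedSpace isPreconnected_Icc
  have hlow : ∃ k, F k ≤ b := by
    refine ⟨⟨K, hk0K, le_rfl⟩, ?_⟩
    rw [hFc]
    · exact hcb.le
    · have h := (hgrow (ι ⟨K, hk0K, le_rfl⟩) hK).2.1
      have hKL : K * (c - a) = ub := div_mul_cancel₀ _ hL.ne'
      exact hKL.symm.le.trans h
  have hhigh : ∃ k, b ≤ F k := by
    let k : Icc k₀ K := ⟨k₀, le_rfl, hk0K⟩
    have hVk : V c (ι k) < η := by
      have h0 : V c ⟨0, le_rfl, hK.le⟩ = 0 := hV0 _ rfl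
      have h := hcont (ι k) (by
        rw [Subtype.dist_eq, Real.dist_eq, sub_zero, abs_of_pos (hpos k)]
        exact (min_le_left _ _).trans_lt (half_lt_self hδ))
      rwa [h0, Real.dist_eq, sub_zero, abs_of_pos (hP k)] at h
    obtain ⟨h1, h2⟩ := hover _ _ (hS k) (hgrow _ (hpos k)).2.2 hVk
    have h3 : U c (ι k) ≤ ub := h1.le.trans ((mi.pt_le_pt mi.npos le_rfl).trans hmn.le)
    refine ⟨k, ?_⟩
    simp only [F, min_eq_left h3]
    exact h2.le
  obtain ⟨k, hk⟩ := mem_range_of_exists_le_of_exists_ge hF hlow hhigh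
  have hSub : U c (ι k) < ub := by
    by_contra! h
    exact hcb.ne ((hFc k h).symm.trans hk)
  refine ⟨k.1, hpos k, fun x => U x (ι k), fun x => V x (ι k), hsol (ι k), by simp [a, hU],
    by simp [a, hV, κ, ι], hSub, ?_⟩
  simpa only [F, min_eq_left hSub.le] using hk

/-- under hypothesis (H), for every matching point `c ∈ (a,b)` and every
pair of meshes there exists a scheme pair `(ũ, x̃)` additionally satisfying
`0 < ũ < u_b`, `ũ' > 0`, `ũ'' ≥ 0` on `(a,c]`, and `c < x̃`, `x̃' > 0`, `x̃'' ≤ 0`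
on `(ũ(c), u_b]`, with `x̃ < b` on `(ũ(c), u_b)`. -/
theorem scheme_pair_exists
    (a b ub : ℝ) (hab : a < b) (hub : 0 < ub)
    (N : ℝ → ℝ → ℝ) (hN : ContDiff ℝ 2 (Function.uncurry N))
    (hH : HypH N a b) :
    ∀ c ∈ Ioo a b, ∀ ms mi : Mesh,
      ms.pt 0 = a → ms.pt ms.n = c → mi.pt 0 = 0 → mi.pt mi.n = ub →
      ∃ u u' X X' : ℝ → ℝ,
        GoodPair N a b c ub ms mi u u' X X' ∧
        ∀ v ∈ Ioo (u c) ub, X v < b := by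
  rintro c ⟨hac, hcb⟩ ms mi rfl rfl hm0 hmn
  obtain ⟨k, hk, u, u', hsol, hu, hu', hs, hend⟩ :=
    exists_shooting_slope hN hub hH hac hcb hm0 hmn
  have hgrow {x : ℝ} (hx : x ∈ Icc (ms.pt 0) (ms.pt ms.n)) :=
    hsol.growth hH hcb.le hu hu' hk hx
  have hupos : ∀ x ∈ Ioc (ms.pt 0) (ms.pt ms.n), 0 < u x := fun x hx =>
    (mul_pos hk (sub_pos.2 hx.1)).trans_le (hgrow (Ioc_subset_Icc_self hx)).2.1
  have hu'pos : ∀ x ∈ Icc (ms.pt 0) (ms.pt ms.n), 0 < u' x := fun x hx =>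
    hk.trans_le (hgrow hx).1
  have hunonneg : ∀ x ∈ Icc (ms.pt 0) (ms.pt ms.n), 0 ≤ u x := fun x hx =>
    (mul_nonneg hk.le (sub_nonneg.2 hx.1)).trans (hgrow hx).2.1
  have hmono : MonotoneOn u (Icc (ms.pt 0) (ms.pt ms.n)) :=
    monotoneOn_of_hasDerivWithinAt_nonneg (convex_Icc _ _)
      (fun x hx => (hsol.1 x hx).continuousWithinAt)
      (fun x hx => (hsol.1 x (interior_subset hx)).mono interior_subset)
      (fun x hx => (hu'pos x (interior_subset hx)).le)
  have hright : ms.pt ms.n ∈ Icc (ms.pt 0) (ms.pt ms.n) := ⟨hac.le, le_rfl⟩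
  obtain ⟨X, X', hinv, hXub, hXs, hX's, hXpos, hXconc, hXlt⟩ :=
    exists_inverse_solution hN hH mi hm0 hmn (hupos _ ⟨hac, le_rfl⟩) hs ⟨hac.le, hcb.le⟩
      (hu'pos _ hright) hend
  refine ⟨u, u', X, X', ⟨⟨hsol, hu, hupos _ ⟨hac, le_rfl⟩, hs, (hu'pos _ hright).ne', hinv,
    hXub, hXs, hX's⟩, fun x hx => ?_, fun i hi x hx hx' => ?_, hXpos,
    fun i hi v hv _ => hXconc i hi v hv⟩, hXlt⟩
  · have hx' := Ioc_subset_Icc_self hx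
    exact ⟨hupos x hx, (hmono hx' hright hx.2).trans_lt hs, hu'pos x hx'⟩
  · have hi' : ms.pt i ∈ Icc (ms.pt 0) (ms.pt ms.n) :=
      ms.cell_subset hi ⟨le_rfl, (ms.mono i hi).le⟩
    exact mul_nonneg (alphaC_nonneg hH ⟨hi'.1, hi'.2.trans hcb.le⟩ (hu'pos _ hi').le
      (hunonneg _ hi') hx.1) (hupos x hx').le
end
end

section
/- Assume hypothesis (H) and let (ũ, x̃) be a scheme pair. Then ũ'(c) ≤ u_b/(b − c). -/
open Set Filter

noncomputable section

/-- A property holding at the first shifted knot and propagating from the left endpoint of each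
shifted mesh subinterval to the whole subinterval holds everywhere between the extreme knots. -/
theorem ubar_induction (m : Mesh) (s : ℝ) {P : ℝ → Prop} (h0 : P (ubar m s 0))
    (step : ∀ i < m.n, P (ubar m s i) → ∀ v ∈ Icc (ubar m s i) (ubar m s (i + 1)), P v) :
    ∀ v ∈ Icc (ubar m s 0) (ubar m s m.n), P v := by
  have key : ∀ k ≤ m.n, P (ubar m s k) ∧ ∀ v ∈ Icc (ubar m s 0) (ubar m s k), P v := by
    intro k
    induction k with
    | zero =>
      intro _
      refine ⟨h0, fun v hv => ?_⟩
      rwa [le_antisymm hv.2 hv.1]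
    | succ k ih =>
      intro hk
      obtain ⟨hPk, hall⟩ := ih (by omega)
      have hle : ubar m s k ≤ ubar m s (k + 1) :=
        max_le_max (m.mono k (by omega)).le le_rfl
      refine ⟨step k (by omega) hPk _ ⟨hle, le_rfl⟩, fun v hv => ?_⟩
      rcases le_total v (ubar m s k) with h | h
      · exact hall v ⟨hv.1, h⟩
      · exact step k (by omega) hPk v ⟨h, hv.2⟩
  exact (key m.n le_rfl).2

/-- A solution of `f' = g f` on `[p, q]` with `g` continuous that is nonzero at `p` has no zero. -/
theorem ne_zero_of_hasDerivWithinAt_mul {f g : ℝ → ℝ} {p q : ℝ}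
    (hg : ContinuousOn g (Icc p q))
    (hf : ∀ v ∈ Icc p q, HasDerivWithinAt f (g v * f v) (Icc p q) v) (hp : f p ≠ 0) :
    ∀ v ∈ Icc p q, f v ≠ 0 := by
  intro v hv hfv
  obtain ⟨K, hK⟩ := isCompact_Icc.exists_bound_of_continuousOn hg
  have hmono : MonotoneOn (fun t => f t ^ 2 * Real.exp (2 * K * t)) (Icc p q) := by
    have hd : ∀ t ∈ Icc p q, HasDerivWithinAt (fun t => f t ^ 2 * Real.exp (2 * K * t))
        (2 * (g t + K) * (f t ^ 2 * Real.exp (2 * K * t))) (Icc p q) t := by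
      intro t ht
      have he : HasDerivAt (fun t : ℝ => Real.exp (2 * K * t))
          (Real.exp (2 * K * t) * (2 * K * 1)) t := ((hasDerivAt_id t).const_mul (2 * K)).exp
      refine (((hf t ht).pow 2).mul he.hasDerivWithinAt).congr_deriv ?_
      simp only [Pi.pow_apply]
      push_cast
      ring
    refine monotoneOn_of_hasDerivWithinAt_nonneg (convex_Icc p q)
      (fun t ht => (hd t ht).continuousWithinAt)
      (fun t ht => (hd t (interior_subset ht)).mono interior_subset) fun t ht => ?_
    have := neg_le_of_abs_le (hK t (interior_subset ht))
    have : 0 ≤ g t + K := by linarith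
    positivity
  have h := hmono ⟨le_rfl, hv.1.trans hv.2⟩ hv hv.1
  have : 0 < f p ^ 2 * Real.exp (2 * K * p) := by positivity
  simp only [hfv] at h
  norm_num at h
  linarith

/-- Under hypothesis (H) the coefficient of the inverse scheme is nonpositive. -/
theorem betaC_nonpos {N : ℝ → ℝ → ℝ} {a b ui p q v : ℝ}
    (hN : Differentiable ℝ (Function.uncurry N)) (hH : HypH N a b)
    (hui : 0 ≤ ui) (hp : 0 ≤ p) (hq : q ∈ Icc a b) (hv : ui ≤ v) :
    betaC N ui p q v ≤ 0 := by
  obtain ⟨hN0, hNx, hNu, -, -⟩ := hH ui hui q hq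
  have hd : DifferentiableAt ℝ (fun t => N t q) ui :=
    (hN.comp (f := fun t : ℝ => (t, q)) (by fun_prop)) ui
  have h1 : pd1 (Ncal N) ui q = pd1 N ui q * ui + N ui q := by
    simp only [pd1, Ncal]
    rw [deriv_fun_mul hd differentiableAt_fun_id, deriv_id'', mul_one]
  have h2 : pd2 (Ncal N) ui q = pd2 N ui q * ui := by
    simp only [pd2, Ncal]
    exact deriv_mul_const_field ui
  have hvu : 0 ≤ v - ui := sub_nonneg.2 hv
  have : 0 ≤ ((pd1 N ui q * ui + N ui q) + pd2 N ui q * ui * p) * (v - ui) + N ui q * ui := by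
    positivity
  rw [betaC, h1, h2, Ncal]
  linarith

/-- The derivative of an inverse scheme solution stays positive if it is positive at the left
endpoint. -/
theorem IsInvSol.deriv_pos {N : ℝ → ℝ → ℝ} {ub s : ℝ} {m : Mesh} {X X' : ℝ → ℝ}
    (h : IsInvSol N ub m s X X') (hfirst : ubar m s 0 = s) (hlast : ubar m s m.n = ub)
    (hpos : 0 < X' s) : ∀ v ∈ Icc s ub, 0 < X' v := by
  obtain ⟨-, hcont, hode⟩ := h
  have hne : ∀ v ∈ Icc s ub, X' v ≠ 0 := by
    have := ubar_induction m s (P := fun v => X' v ≠ 0) (by rw [hfirst]; exact hpos.ne') ?_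
    · rwa [hfirst, hlast] at this
    · intro i hi hPi
      have hc : ContinuousOn X' (Icc (ubar m s i) (ubar m s (i + 1))) :=
        fun v hv => (hode i hi v hv).continuousWithinAt
      refine ne_zero_of_hasDerivWithinAt_mul
        (g := fun v => betaC N (ubar m s i) (X' (ubar m s i)) (X (ubar m s i)) v * X' v ^ 2)
        ?_ (fun v hv => (hode i hi v hv).congr_deriv (by ring)) hPi
      refine ContinuousOn.mul (Continuous.continuousOn ?_) (hc.pow 2)
      unfold betaC
      fun_prop
  intro v hv
  by_contra hneg
  obtain ⟨w, hw, hw0⟩ := intermediate_value_Icc' hv.1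
    (hcont.mono (Icc_subset_Icc_right hv.2)) ⟨not_lt.1 hneg, hpos.le⟩
  exact hne w ⟨hw.1, hw.2.trans hv.2⟩ hw0

/-- under hypothesis (H), any scheme pair `(ũ, x̃)` satisfies
`ũ'(c) ≤ u_b/(b − c)`. -/
theorem scheme_pair_slope_upper_bound
    (a b c ub : ℝ) (hab : a < b) (hub : 0 < ub) (hc : c ∈ Ioo a b)
    (N : ℝ → ℝ → ℝ) (hN : ContDiff ℝ 2 (Function.uncurry N))
    (hH : HypH N a b)
    (ms mi : Mesh) (hms0 : ms.pt 0 = a) (hmsn : ms.pt ms.n = c)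
    (hmi0 : mi.pt 0 = 0) (hmin : mi.pt mi.n = ub)
    (u u' X X' : ℝ → ℝ)
    (hp : IsSchemePair N a b c ub ms mi u u' X X') :
    u' c ≤ ub / (b - c) := by
  obtain ⟨-, -, hs0, hsub, hne, hinv, hXub, hXs, hXderiv⟩ := hp
  have hbc : 0 < b - c := sub_pos.2 hc.2
  rcases lt_or_gt_of_ne hne with hneg | hpos
  · exact hneg.le.trans (by positivity)
  have hfirst : ubar mi (u c) 0 = u c := by rw [ubar, hmi0, max_eq_right hs0.le]
  have hlast : ubar mi (u c) mi.n = ub := by rw [ubar, hmin, max_eq_left hsub.le]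
  have hXpos := hinv.deriv_pos hfirst hlast (by rw [hXderiv]; positivity)
  obtain ⟨hder, -, hode⟩ := hinv
  have hXcont : ContinuousOn X (Icc (u c) ub) := fun v hv => (hder v hv).continuousWithinAt
  have hXmono : MonotoneOn X (Icc (u c) ub) :=
    monotoneOn_of_hasDerivWithinAt_nonneg (convex_Icc _ _) hXcont
      (fun v hv => (hder v (interior_subset hv)).mono interior_subset)
      (fun v hv => (hXpos v (interior_subset hv)).le)
  have hub_mem : ub ∈ Icc (u c) ub := ⟨hsub.le, le_rfl⟩
  have hs_mem : u c ∈ Icc (u c) ub := ⟨le_rfl, hsub.le⟩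
  have hXrange : ∀ v ∈ Icc (u c) ub, X v ∈ Icc a b := fun v hv =>
    ⟨hc.1.le.trans (hXs ▸ hXmono hs_mem hv hv.1), hXub ▸ hXmono hv hub_mem hv.2⟩
  have hknot : ∀ i ≤ mi.n, ubar mi (u c) i ∈ Icc (u c) ub := by
    intro i hi
    refine ⟨le_max_right _ _, max_le ?_ hsub.le⟩
    induction hi using Nat.decreasingInduction with
    | self => exact hmin.le
    | of_succ k hk ih => exact (mi.mono k hk).le.trans ih
  have hbound : ∀ v ∈ Icc (u c) ub, X' v ≤ X' (u c) := by
    have := ubar_induction mi (u c) (P := fun v => X' v ≤ X' (u c)) (by rw [hfirst]) ?_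
    · rwa [hfirst, hlast] at this
    · intro i hi hPi v hv
      have hi_mem := hknot i hi.le
      have hsubset : Icc (ubar mi (u c) i) (ubar mi (u c) (i + 1)) ⊆ Icc (u c) ub :=
        Icc_subset_Icc hi_mem.1 (hknot (i + 1) hi).2
      have hanti : AntitoneOn X' (Icc (ubar mi (u c) i) (ubar mi (u c) (i + 1))) := by
        refine antitoneOn_of_hasDerivWithinAt_nonpos (convex_Icc _ _)
          (fun t ht => (hode i hi t ht).continuousWithinAt)
          (fun t ht => (hode i hi t (interior_subset ht)).mono interior_subset) fun t ht => ?_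
        have ht' := interior_subset ht
        exact mul_nonpos_of_nonpos_of_nonneg
          (betaC_nonpos (hN.differentiable (by norm_num)) hH (hs0.le.trans hi_mem.1)
            (hXpos _ hi_mem).le (hXrange _ hi_mem) ht'.1)
          (pow_nonneg (hXpos t (hsubset ht')).le 3)
      exact (hanti ⟨le_rfl, hv.1.trans hv.2⟩ hv hv.1).trans hPi
  obtain ⟨w, hw, hslope⟩ := exists_hasDerivAt_eq_slope X X' hsub hXcont
    (fun v hv => (hder v (Ioo_subset_Icc_self hv)).hasDerivAt (Icc_mem_nhds hv.1 hv.2))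
  have hle := hbound w (Ioo_subset_Icc_self hw)
  rw [hslope, hXub, hXs, hXderiv, div_le_div_iff₀ (sub_pos.2 hsub) hpos] at hle
  rw [le_div_iff₀ hbc]
  linarith
end
end
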